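/- Let M be a 3-connected matroid such that |E(M)| >= 4 and M is neither a wheel nor a whirl, and let (e_1, ..., e_n) be a fan of M. If T ⊆ {e_1, ..., e_n} is a triangle of M, then T = {e_i, e_{i+1}, e_{i+2}} for some i ∈ {1, ..., n−2} such that e_i is a spoke element. -/

import Mathlib

/-!
The spoke elements of a fan, together with its two ends, span the fan. If this set is dependent,
then the fan, trimmed so that it begins and ends with a rim element, has too small a rank: each of
its triads lowers the rank of its complement by one, so that its complement has at most one element
by 3-connectivity. It has exactly one, which closes the fan up into a cyclic sequence of triangles,
and `M` is a wheel or a whirl.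

If the spoke elements and the two ends are independent, every circuit `C` contained in the fan
contains an interior rim element. The first of these is the only one next to the spoke element
preceding it, so this spoke element belongs to `C`: otherwise it would lie in the closure of the
remaining spoke elements and ends. Likewise `C` contains the last of its interior rim elements and
the spoke element following it. A circuit of size three has room for all this only if the first and
the last interior rim element coincide.
-/

open Matroid Set

universe u

variable {α : Type u}

namespace PaperDefs

/-- Deletion of a set of elements from a matroid. -/
def mdel (M : Matroid α) (D : Set α) : Matroid α := M ↾ (M.E \ D)

/-- Contraction of a set of elements in a matroid. -/
def mcon (M : Matroid α) (C : Set α) : Matroid α := (mdel M✶ C)✶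

/-- A circuit: a minimal dependent set. -/
def IsCircuit (M : Matroid α) (C : Set α) : Prop :=
  M.Dep C ∧ ∀ X, X ⊂ C → M.Indep X

/-- A triangle: a 3-element circuit. -/
def IsTriangle (M : Matroid α) (T : Set α) : Prop :=
  IsCircuit M T ∧ T.encard = 3

/-- A triad: a 3-element cocircuit. -/
def IsTriad (M : Matroid α) (T : Set α) : Prop := IsTriangle M✶ T

/-- The (extended natural number) rank of a set in a matroid: the supremum of the
cardinalities of its independent subsets. -/
noncomputable def erk (M : Matroid α) (X : Set α) : ℕ∞ :=
  ⨆ I ∈ {I : Set α | M.Indep I ∧ I ⊆ X}, I.encard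

/-- Two elements are connected if they are equal or lie in a common circuit. -/
def ConnTo (M : Matroid α) (e f : α) : Prop :=
  (e = f ∧ e ∈ M.E) ∨ ∃ C, IsCircuit M C ∧ e ∈ C ∧ f ∈ C

/-- A matroid is connected if its ground set is nonempty and every two of its elements
are connected. -/
def Conn (M : Matroid α) : Prop :=
  M.E.Nonempty ∧ ∀ e ∈ M.E, ∀ f ∈ M.E, ConnTo M e f

/-- A 2-separation of a matroid: a partition `(X, Y)` of the ground set with both sides
of size at least two and `r(X) + r(Y) - r(M) ≤ 1`. -/
def TwoSep (M : Matroid α) (X Y : Set α) : Prop :=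
  X ∪ Y = M.E ∧ Disjoint X Y ∧ 2 ≤ X.encard ∧ 2 ≤ Y.encard ∧
    erk M X + erk M Y ≤ erk M M.E + 1

/-- A matroid is 3-connected if it is connected and has no 2-separation. -/
def ThreeConn (M : Matroid α) : Prop :=
  Conn M ∧ ∀ X Y, ¬ TwoSep M X Y

/-- A matroid is 3-connected up to series and parallel sets if it is connected and, for
every 2-separation `(X, Y)`, `min {r X, r Y} = 1` or `min {r✶ X, r✶ Y} = 1`. -/
def ThreeConnUpToSP (M : Matroid α) : Prop :=
  Conn M ∧ ∀ X Y, TwoSep M X Y →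
    min (erk M X) (erk M Y) = 1 ∨ min (erk M✶ X) (erk M✶ Y) = 1

/-- `N` is a minor of `M`: it is obtained from `M` by contracting a set `C` and deleting
a disjoint set `D`. -/
def IsMinor (N M : Matroid α) : Prop :=
  ∃ C D, C ⊆ M.E ∧ D ⊆ M.E ∧ Disjoint C D ∧ N = mdel (mcon M C) D

/-- `M` is isomorphic to `N`: there is a bijection between the ground sets under which
independence corresponds. -/
def IsoTo (M N : Matroid α) : Prop :=
  ∃ f : α → α, Set.BijOn f M.E N.E ∧ ∀ I, I ⊆ M.E → (M.Indep I ↔ N.Indep (f '' I))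

/-- The cyclic interval `{i, i+1, ..., j-1}` in `ZMod r`. -/
def cycArc (r : ℕ) (i j : ZMod r) : Set (ZMod r) :=
  {k | ∃ m : ℕ, m < (j - i).val ∧ k = i + (m : ZMod r)}

/-- `M` is (isomorphic to) a rank-`r` wheel for some `r ≥ 2`, i.e. the cycle matroid of
the wheel graph with `r` spokes: there is a labelling of the ground set by spokes `s i`
and rim elements `w i` so that the circuits of `M` are precisely the rim together with
the sets consisting of two spokes and the rim elements of one of the two arcs joining
them. -/
def IsWheel (M : Matroid α) : Prop :=
  ∃ r : ℕ, 2 ≤ r ∧ ∃ s w : ZMod r → α,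
    Function.Injective (Sum.elim s w) ∧
    M.E = Set.range s ∪ Set.range w ∧
    ∀ C, IsCircuit M C ↔
      (C = Set.range w ∨
        ∃ i j : ZMod r, i ≠ j ∧ C = {s i, s j} ∪ w '' cycArc r i j)

/-- `M` is (isomorphic to) a rank-`r` whirl for some `r ≥ 2`: obtained from the rank-`r`
wheel by relaxing the rim circuit; its circuits are the two-spokes-plus-arc circuits of
the wheel together with the sets consisting of the whole rim and a single spoke. -/
def IsWhirl (M : Matroid α) : Prop :=
  ∃ r : ℕ, 2 ≤ r ∧ ∃ s w : ZMod r → α,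
    Function.Injective (Sum.elim s w) ∧
    M.E = Set.range s ∪ Set.range w ∧
    ∀ C, IsCircuit M C ↔
      ((∃ i : ZMod r, C = insert (s i) (Set.range w)) ∨
        ∃ i j : ZMod r, i ≠ j ∧ C = {s i, s j} ∪ w '' cycArc r i j)

/-- A triangle if `b = true`, a triad if `b = false`. -/
def TriOrTriad (M : Matroid α) (b : Bool) (T : Set α) : Prop :=
  cond b (IsTriangle M T) (IsTriad M T)

/-- The alternation pattern of a fan, recorded as a list: position `i` (zero-based)
carries a spoke element iff `fanBool b i = true`, where `b` records whether the first
triple of the fan is a triangle. -/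
def fanBool (b : Bool) (i : ℕ) : Bool := if i % 2 = 0 then b else !b

/-- `F` is a fan of `M` whose first triple is a triangle if `b = true` (so that the
first element is a spoke element) and a triad if `b = false`: a list of at least three
distinct elements of the ground set in which every three consecutive elements form
alternately triangles and triads. -/
def IsFanWith (M : Matroid α) (b : Bool) (F : List α) : Prop :=
  3 ≤ F.length ∧ F.Nodup ∧ (∀ x ∈ F, x ∈ M.E) ∧
  ∀ (l₁ : List α) (x y z : α) (l₂ : List α), F = l₁ ++ x :: y :: z :: l₂ →
    TriOrTriad M (fanBool b l₁.length) {x, y, z}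

/-- `F` is a fan of `M`. -/
def IsFan (M : Matroid α) (F : List α) : Prop := ∃ b, IsFanWith M b F

/-- `F` is consistent with `F'`: `F` is a (not necessarily contiguous) subsequence of
`F'` or of its reversal. -/
def Consistent (F F' : List α) : Prop := F.Sublist F' ∨ F.Sublist F'.reverse

/-- A finite family of lists is pairwise disjoint. -/
def PairwiseDisjointLists (𝓕 : Finset (List α)) : Prop :=
  ∀ F ∈ 𝓕, ∀ G ∈ 𝓕, F ≠ G → ∀ x ∈ F, x ∉ G

/-- `𝓕` is a covering family of `M'` relative to `N` and `FN`: a family of pairwise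
disjoint fans of `M'`, of the same size as `FN`, such that every fan of `FN` is
consistent with a member of `𝓕` and every element of `E(M') - E(N)` lies in a member
of `𝓕`. -/
def CoveringFamily (N : Matroid α) (FN : Finset (List α)) (M' : Matroid α)
    (𝓕 : Finset (List α)) : Prop :=
  (∀ F ∈ 𝓕, IsFan M' F) ∧ PairwiseDisjointLists 𝓕 ∧ 𝓕.card = FN.card ∧
  (∀ F ∈ FN, ∃ F' ∈ 𝓕, Consistent F F') ∧
  (∀ x ∈ M'.E \ N.E, ∃ F ∈ 𝓕, x ∈ F)

/-- `M` is obtained from `M'` by a fan-lengthening move on the fan `F₀` of `M'`,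
producing the fan `F` of `M`: either `M' = M \ e₁` where `e₁` is a terminal spoke
element of `F`, or `M' = M / e₁` where `e₁` is a terminal rim element of `F`, or
(when `F` has at least five elements) `M' = M / eᵢ \ eᵢ₊₁` for a rim element `eᵢ`
of `F` with `1 ≤ i ≤ n - 1`; in each case `M` and `M'` are 3-connected and `F₀` is
the corresponding shortened fan. -/
def FanLengthen (M' M : Matroid α) (F₀ F : List α) : Prop :=
  ThreeConn M ∧ 4 ≤ F.length ∧ IsFan M' F₀ ∧
  ∃ b, IsFanWith M b F ∧
    ((∃ e F', F = e :: F' ∧ b = true ∧ M' = mdel M {e} ∧ ThreeConn M' ∧ F₀ = F') ∨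
     (∃ e F', F = e :: F' ∧ b = false ∧ M' = mcon M {e} ∧ ThreeConn M' ∧ F₀ = F') ∨
     (5 ≤ F.length ∧ ∃ (l₁ : List α) (x y : α) (l₂ : List α),
        F = l₁ ++ x :: y :: l₂ ∧ fanBool b l₁.length = false ∧
        M' = mdel (mcon M {x}) {y} ∧ ThreeConn M' ∧ F₀ = l₁ ++ l₂))

/-- The fan-extensions of `N` relative to the family `FN` of fans of `N`: the smallest
collection of matroids containing `N` and closed under fan-lengthening moves performed
on fans belonging to covering families. -/
inductive FanExt (N : Matroid α) (FN : Finset (List α)) : Matroid α → Prop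
  | base : FanExt N FN N
  | step (M' M : Matroid α) (𝓕 : Finset (List α)) (F₀ F : List α) :
      FanExt N FN M' → CoveringFamily N FN M' 𝓕 → F₀ ∈ 𝓕 →
      FanLengthen M' M F₀ F → FanExt N FN M

/-- The covering family `𝓕` of `M` admits a fan-shortening move: there are a matroid
`M'` having `N` as a minor and a fan `F₀` of `M'` such that `M` is obtained from `M'`
by a fan-lengthening move on `F₀` producing a fan that belongs to `𝓕`. -/
def AdmitsFanShortening (N M : Matroid α) (𝓕 : Finset (List α)) : Prop :=
  ∃ (M' : Matroid α) (F₀ F : List α), IsMinor N M' ∧ F ∈ 𝓕 ∧ FanLengthen M' M F₀ F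

/-- The alternation pattern of a fan presented as a function with one-based indices:
position `i` carries a spoke element iff `posBool b i = true`, where `b` records
whether the first triple of the fan is a triangle. -/
def posBool (b : Bool) (i : ℕ) : Bool := if i % 2 = 1 then b else !b

/-- `(e 1, ..., e n)` is a fan of `M` whose first triple is a triangle if `b = true`
(so that `e 1` is a spoke element) and a triad if `b = false`: at least three distinct
elements of the ground set in which every three consecutive elements form alternately
triangles and triads. -/
def IsFanFun (M : Matroid α) (b : Bool) (n : ℕ) (e : ℕ → α) : Prop :=
  3 ≤ n ∧ (∀ i j, 1 ≤ i → i ≤ n → 1 ≤ j → j ≤ n → e i = e j → i = j) ∧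
  (∀ i, 1 ≤ i → i ≤ n → e i ∈ M.E) ∧
  ∀ i, 1 ≤ i → i + 2 ≤ n → TriOrTriad M (posBool b i) {e i, e (i+1), e (i+2)}

/-- The set of elements of the fan `(e 1, ..., e n)`. -/
def fanSet (n : ℕ) (e : ℕ → α) : Set α := {a | ∃ i, 1 ≤ i ∧ i ≤ n ∧ a = e i}

/-- The set of rim elements of the fan `(e 1, ..., e n)` with alternation pattern `b`. -/
def rimSet (b : Bool) (n : ℕ) (e : ℕ → α) : Set α :=
  {a | ∃ i, 1 ≤ i ∧ i ≤ n ∧ posBool b i = false ∧ a = e i}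

/-- `M` is representable over the field `𝔽`. -/
def RepOver (M : Matroid α) (𝔽 : Type*) [Field 𝔽] : Prop :=
  ∃ f : α → (α → 𝔽),
    ∀ I : Set α, I ⊆ M.E → (M.Indep I ↔ LinearIndependent 𝔽 (fun x : I => f (x : α)))

/-- `M` has a minor isomorphic to a member of `𝓢`. -/
def HasSMinor (𝓢 : Set (Matroid α)) (M : Matroid α) : Prop :=
  ∃ S ∈ 𝓢, ∃ N, IsMinor N M ∧ IsoTo N S

/-- `M` is `𝓢`-fragile: for every element `e` of `M`, at least one of `M \ e` and
`M / e` has no `𝓢`-minor. -/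
def SFragile (𝓢 : Set (Matroid α)) (M : Matroid α) : Prop :=
  ∀ e ∈ M.E, ¬ HasSMinor 𝓢 (mdel M {e}) ∨ ¬ HasSMinor 𝓢 (mcon M {e})

end PaperDefs

open PaperDefs

namespace PaperDefs

variable {M : Matroid α}

lemma isCircuit_iff {C : Set α} : IsCircuit M C ↔ M.IsCircuit C :=
  Matroid.isCircuit_iff_forall_ssubset.symm

lemma erk_eq_eRk (M : Matroid α) (X : Set α) : erk M X = M.eRk X := by
  apply le_antisymm
  · exact iSup₂_le fun I hI ↦ hI.1.encard_le_eRk_of_subset hI.2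
  · obtain ⟨I, hI⟩ := M.exists_isBasis' X
    rw [← hI.encard_eq_eRk]
    exact le_iSup₂_of_le I ⟨hI.indep, hI.subset⟩ le_rfl

/-! ### Triangles, closures and ranks -/

lemma mem_closure_of_triangle {X : Set α} {x y z : α} (h : M.IsCircuit {x, y, z})
    (hx : x ∈ M.closure X) (hz : z ∈ M.closure X) : y ∈ M.closure X := by
  refine Matroid.closure_subset_closure_of_subset_closure ?_
    (h.mem_closure_sdiff_singleton_of_mem (e := y) (by simp))
  rintro t ⟨rfl | rfl | rfl, ht⟩ <;> simp_all

lemma isCircuit_triple_swap_right {x y z : α} (h : M.IsCircuit {x, y, z}) :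
    M.IsCircuit {x, z, y} := by
  rwa [pair_comm]

lemma isCircuit_triple_reverse {x y z : α} (h : M.IsCircuit {x, y, z}) :
    M.IsCircuit {z, y, x} := by
  rwa [pair_comm, insert_comm, pair_comm]

/-- Otherwise `C` would put `y`, and then the triangle would put `x`, in the closure of `H`. -/
lemma mem_of_triangle_of_sdiff_subset_closure {H C : Set α} {x y z : α}
    (hx : x ∉ M.closure H) (htri : M.IsCircuit {z, y, x}) (hz : z ∈ M.closure H)
    (hC : M.IsCircuit C) (hy : y ∈ C) (hCH : C \ {x, y} ⊆ M.closure H) : x ∈ C := by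
  by_contra hxC
  have hyH : y ∈ M.closure H := by
    refine Matroid.closure_subset_closure_of_subset_closure (fun c hc ↦ hCH ⟨hc.1, ?_⟩)
      (hC.mem_closure_sdiff_singleton_of_mem hy)
    rintro (rfl | rfl)
    exacts [hxC hc.1, hc.2 rfl]
  exact hx (mem_closure_of_triangle (isCircuit_triple_swap_right htri) hz hyH)

lemma isCircuit_triple_of_eRk_le_two {a b c : α} (hab : M.Indep {a, b}) (hac : M.Indep {a, c})
    (hbc : M.Indep {b, c}) (hab' : a ≠ b) (hac' : a ≠ c) (hbc' : b ≠ c)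
    (hr : M.eRk {a, b, c} ≤ 2) : M.IsCircuit {a, b, c} := by
  have hE : ({a, b, c} : Set α) ⊆ M.E :=
    Set.insert_subset (hab.subset_ground (by simp)) hbc.subset_ground
  rw [Matroid.isCircuit_iff_dep_forall_sdiff_singleton_indep]
  constructor
  · rw [← Matroid.not_indep_iff hE]
    intro hi
    rw [hi.eRk_eq_encard, Set.encard_eq_three.2 ⟨a, b, c, hab', hac', hbc', rfl⟩] at hr
    norm_num at hr
  · rintro x (rfl | rfl | rfl)
    · exact hbc.subset (by rintro y ⟨rfl | rfl | rfl, hy⟩ <;> simp_all)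
    · exact hac.subset (by rintro y ⟨rfl | rfl | rfl, hy⟩ <;> simp_all)
    · exact hab.subset (by rintro y ⟨rfl | rfl | rfl, hy⟩ <;> simp_all)

lemma eRk_compl_union_cocircuit_add_one_le [M.RankFinite] {X K : Set α} (hK : M.IsCocircuit K)
    (hXK : M.Coindep (X ∩ K)) : M.eRk (M.E \ (X ∪ K)) + 1 ≤ M.eRk (M.E \ X) := by
  have hcompl : M.eRk (M.E \ K) + 1 ≤ M.eRank := by
    have h := (Matroid.isCocircuit_iff_minimal_compl_nonspanning.1 hK).prop
    rw [Matroid.spanning_iff_eRk_le, not_le] at h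
    exact Order.add_one_le_of_lt h
  have hsubmod := M.eRk_compl_union_add_eRk_compl_inter_le X K
  rw [hXK.compl_spanning.eRk_eq] at hsubmod
  have hfin (Y : Set α) : M.eRk Y ≠ ⊤ := (M.isRkFinite_set Y).eRk_lt_top.ne
  rw [← ENat.add_le_add_iff_right (hfin (M.E \ K))]
  calc M.eRk (M.E \ (X ∪ K)) + 1 + M.eRk (M.E \ K)
      = M.eRk (M.E \ (X ∪ K)) + (M.eRk (M.E \ K) + 1) := by ring
    _ ≤ M.eRk (M.E \ (X ∪ K)) + M.eRank := by gcongr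
    _ ≤ M.eRk (M.E \ X) + M.eRk (M.E \ K) := hsubmod

/-! ### Consequences of 3-connectivity -/

lemma encard_pair_le_two (a b : α) : ({a, b} : Set α).encard ≤ 2 := by
  simpa only [encard_singleton, one_add_one_eq_two] using encard_insert_le {b} a

lemma two_le_encard_sdiff_pair {E : Set α} (h : 4 ≤ E.encard) (a b : α) :
    2 ≤ (E \ {a, b}).encard := by
  rw [← ENat.add_le_add_iff_right (show (2 : ℕ∞) ≠ ⊤ by simp)]
  calc (2 + 2 : ℕ∞) = 4 := by norm_num
    _ ≤ E.encard := h
    _ ≤ (E \ {a, b}).encard + ({a, b} : Set α).encard := encard_le_encard_sdiff_add_encard E {a, b}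
    _ ≤ (E \ {a, b}).encard + 2 := by gcongr; exact encard_pair_le_two a b

lemma nontrivial_of_four_le_encard {E : Set α} (h : 4 ≤ E.encard) : E.Nontrivial :=
  one_lt_encard_iff_nontrivial.1 (lt_of_lt_of_le (by norm_num) h)

namespace ThreeConn

lemma eRank_add_one_lt (hM : ThreeConn M) {X : Set α} (hX : X ⊆ M.E) (h2 : 2 ≤ X.encard)
    (h2' : 2 ≤ (M.E \ X).encard) : M.eRank + 1 < M.eRk X + M.eRk (M.E \ X) := by
  refine lt_of_not_ge fun h ↦ hM.2 X (M.E \ X)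
    ⟨union_sdiff_cancel hX, disjoint_sdiff_right, h2, h2', ?_⟩
  simpa only [erk_eq_eRk, eRk_ground] using h

lemma eRank_add_one_lt_pair (hM : ThreeConn M) (hcard : 4 ≤ M.E.encard) {a b : α}
    (ha : a ∈ M.E) (hb : b ∈ M.E) (hab : a ≠ b) :
    M.eRank + 1 < M.eRk {a, b} + M.eRk (M.E \ {a, b}) :=
  hM.eRank_add_one_lt (pair_subset ha hb) (encard_pair hab).ge (two_le_encard_sdiff_pair hcard a b)

lemma rankFinite (hM : ThreeConn M) (hcard : 4 ≤ M.E.encard) : M.RankFinite := by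
  obtain ⟨a, ha, b, hb, hab⟩ := nontrivial_of_four_le_encard hcard
  have h := hM.eRank_add_one_lt_pair hcard ha hb hab
  rw [← Matroid.eRank_ne_top_iff]
  rintro htop
  simp [htop] at h

lemma indep_pair (hM : ThreeConn M) (hcard : 4 ≤ M.E.encard) {a b : α} (ha : a ∈ M.E)
    (hb : b ∈ M.E) (hab : a ≠ b) : M.Indep {a, b} := by
  refine (M.isRkFinite_of_finite (toFinite _)).indep_of_encard_le_eRk ?_
  by_contra! hlt
  rw [encard_pair hab, ← one_add_one_eq_two] at hlt
  have h := hM.eRank_add_one_lt_pair hcard ha hb hab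
  refine h.not_ge ?_
  rw [add_comm M.eRank]
  exact add_le_add (Order.le_of_lt_add_one hlt) (M.eRk_le_eRank _)

lemma coindep_pair (hM : ThreeConn M) (hcard : 4 ≤ M.E.encard) {a b : α} (ha : a ∈ M.E)
    (hb : b ∈ M.E) (hab : a ≠ b) : M.Coindep {a, b} := by
  have := hM.rankFinite hcard
  rw [Matroid.coindep_iff_compl_spanning (pair_subset ha hb), Matroid.spanning_iff_eRk_le]
  by_contra! hlt
  refine (hM.eRank_add_one_lt_pair hcard ha hb hab).not_ge ?_
  calc M.eRk {a, b} + M.eRk (M.E \ {a, b}) ≤ 2 + M.eRk (M.E \ {a, b}) := by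
        gcongr; exact (M.eRk_le_encard _).trans (encard_pair_le_two a b)
    _ = M.eRk (M.E \ {a, b}) + 1 + 1 := by ring
    _ ≤ M.eRank + 1 := by gcongr; exact Order.add_one_le_of_lt hlt

lemma loopless (hM : ThreeConn M) (hcard : 4 ≤ M.E.encard) : M.Loopless := by
  refine Matroid.loopless_iff_forall_isNonloop.2 fun a ha ↦ ?_
  obtain ⟨b, hb, hba⟩ := (nontrivial_of_four_le_encard hcard).exists_ne a
  exact Matroid.indep_singleton.1 ((hM.indep_pair hcard hb ha hba).subset (by simp))

lemma dual_loopless (hM : ThreeConn M) (hcard : 4 ≤ M.E.encard) : M✶.Loopless := by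
  refine Matroid.loopless_iff_forall_isNonloop.2 fun a ha ↦ ?_
  obtain ⟨b, hb, hba⟩ := (nontrivial_of_four_le_encard hcard).exists_ne a
  exact Matroid.indep_singleton.1 ((hM.coindep_pair hcard hb ha hba).subset (by simp))

end ThreeConn

/-! ### Cyclic intervals -/

section CyclicInterval

variable {k : ℕ} {i j : ZMod k}

lemma mem_cycArc_add {x : ZMod k} {m : ℕ} (hm : m < k) :
    x ∈ cycArc k i (i + m) ↔ ∃ l < m, x = i + (l : ZMod k) := by
  simp [cycArc, ZMod.val_natCast_of_lt hm]

lemma left_mem_cycArc (hij : i ≠ j) : i ∈ cycArc k i j :=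
  ⟨0, ZMod.val_pos.2 (sub_ne_zero.2 hij.symm), by simp⟩

lemma right_notMem_cycArc : j ∉ cycArc k i j := by
  rintro ⟨m, hm, rfl⟩
  rw [add_sub_cancel_left, ZMod.val_natCast] at hm
  exact (Nat.mod_le m k).not_gt hm

lemma exists_cycArc_subset_right_notMem [NeZero k] {P : Set (ZMod k)} (hi : i ∈ P)
    (hP : P ≠ univ) : ∃ j, cycArc k i j ⊆ P ∧ j - 1 ∈ P ∧ j ∉ P := by
  classical
  obtain ⟨q, hq⟩ := (ne_univ_iff_exists_notMem P).1 hP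
  have hex : ∃ m : ℕ, i + (m : ZMod k) ∉ P := ⟨(q - i).val, by simpa using hq⟩
  have hlt {l : ℕ} (hl : l < Nat.find hex) : i + (l : ZMod k) ∈ P := not_not.1 (Nat.find_min hex hl)
  have hm : Nat.find hex < k :=
    (Nat.find_min' hex (by simpa using hq)).trans_lt (ZMod.val_lt (q - i))
  obtain ⟨l, hl⟩ : ∃ l, Nat.find hex = l + 1 :=
    Nat.exists_eq_add_one.2 ((Nat.find_pos hex).2 (by simpa using hi))
  refine ⟨i + (Nat.find hex : ℕ), ?_, ?_, Nat.find_spec hex⟩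
  · intro x hx
    obtain ⟨l, hl, rfl⟩ := (mem_cycArc_add hm).1 hx
    exact hlt hl
  · have h := hlt (l := l) (by omega)
    rwa [hl, Nat.cast_succ, ← add_assoc, add_sub_cancel_right]

lemma exists_maximal_cycArc [NeZero k] {P : Set (ZMod k)} (hne : P.Nonempty) (hP : P ≠ univ) :
    ∃ i j, i ≠ j ∧ cycArc k i j ⊆ P ∧ i - 1 ∉ P ∧ i ∈ P ∧ j - 1 ∈ P ∧ j ∉ P := by
  obtain ⟨q, hq⟩ := (ne_univ_iff_exists_notMem P).1 hP
  obtain ⟨i, -, hi', hi⟩ :=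
    exists_cycArc_subset_right_notMem (P := Pᶜ) hq (compl_ne_univ.2 hne)
  obtain ⟨j, hsub, hj', hj⟩ := exists_cycArc_subset_right_notMem (not_not.1 hi) hP
  exact ⟨i, j, fun h ↦ hi (h ▸ hj), hsub, hi', not_not.1 hi, hj', hj⟩

end CyclicInterval

/-! ### Recognising wheels and whirls -/

/-- A labelling of the elements of `M` by spokes `s i` and rim elements `w i`, as in a wheel or a
whirl of rank `k`, recording only that the spokes form a base and that each rim element forms a
triangle with the two spokes next to it. -/
structure IsWheelLabelling (M : Matroid α) {k : ℕ} (s w : ZMod k → α) : Prop where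
  two_le : 2 ≤ k
  injective : Function.Injective (Sum.elim s w)
  ground_eq : M.E = range s ∪ range w
  isBase : M.IsBase (range s)
  triangle : ∀ i, M.IsCircuit {s i, w i, s (i + 1)}

namespace IsWheelLabelling

variable {k : ℕ} {s w : ZMod k → α} {C : Set α} {i j : ZMod k}

lemma neZero (h : IsWheelLabelling M s w) : NeZero k := ⟨by have := h.two_le; omega⟩

lemma one_ne_zero (h : IsWheelLabelling M s w) : (1 : ZMod k) ≠ 0 := by
  have : Fact (1 < k) := ⟨h.two_le⟩
  exact _root_.one_ne_zero

lemma spoke_inj (h : IsWheelLabelling M s w) : s i = s j ↔ i = j :=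
  (h.injective.eq_iff (a := .inl i) (b := .inl j)).trans Sum.inl_injective.eq_iff

lemma rim_inj (h : IsWheelLabelling M s w) : w i = w j ↔ i = j :=
  (h.injective.eq_iff (a := .inr i) (b := .inr j)).trans Sum.inr_injective.eq_iff

lemma spoke_ne_rim (h : IsWheelLabelling M s w) : s i ≠ w j :=
  h.injective.ne (a₁ := .inl i) (a₂ := .inr j) (by simp)

lemma spoke_mem_ground (h : IsWheelLabelling M s w) : s i ∈ M.E :=
  h.ground_eq ▸ Or.inl (mem_range_self i)

lemma range_rim_subset_ground (h : IsWheelLabelling M s w) : range w ⊆ M.E :=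
  h.ground_eq ▸ subset_union_right

/-- The right-hand side is the complement of the fundamental cocircuit of `s i`. -/
lemma mem_closure_range_sdiff (h : IsWheelLabelling M s w) {c : α} (hc : c ∈ M.E)
    (hs : c ≠ s i) (hw : c ≠ w i) (hw' : c ≠ w (i - 1)) : c ∈ M.closure (range s \ {s i}) := by
  have hspoke {j} (hj : j ≠ i) : s j ∈ M.closure (range s \ {s i}) :=
    M.mem_closure_of_mem' ⟨mem_range_self j, fun hji ↦ hj (h.spoke_inj.1 hji)⟩ h.spoke_mem_ground
  rw [h.ground_eq] at hc
  rcases hc with ⟨j, rfl⟩ | ⟨j, rfl⟩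
  · exact hspoke fun hji ↦ hs (hji ▸ rfl)
  · refine mem_closure_of_triangle (h.triangle j) (hspoke fun hji ↦ hw (hji ▸ rfl))
      (hspoke fun hji ↦ hw' ?_)
    rw [← hji, add_sub_cancel_right]

lemma spoke_mem_of_xor (h : IsWheelLabelling M s w) (hC : M.IsCircuit C)
    (hxor : Xor (w (i - 1) ∈ C) (w i ∈ C)) : s i ∈ C := by
  have hnot : s i ∉ M.closure (range s \ {s i}) :=
    h.isBase.indep.notMem_closure_sdiff_of_mem (mem_range_self i)
  have hspoke {j} (hj : j ≠ i) : s j ∈ M.closure (range s \ {s i}) :=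
    h.mem_closure_range_sdiff h.spoke_mem_ground (fun hji ↦ hj (h.spoke_inj.1 hji)) h.spoke_ne_rim
      h.spoke_ne_rim
  rcases hxor with ⟨hin, hout⟩ | ⟨hin, hout⟩
  · refine mem_of_triangle_of_sdiff_subset_closure hnot (by simpa using h.triangle (i - 1))
      (hspoke fun hi ↦ h.one_ne_zero (by simpa using hi)) hC hin fun c hc ↦ ?_
    exact h.mem_closure_range_sdiff (hC.subset_ground hc.1) (fun hcs ↦ hc.2 (.inl hcs))
      (fun hcw ↦ hout (hcw ▸ hc.1)) (fun hcw ↦ hc.2 (.inr hcw))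
  · refine mem_of_triangle_of_sdiff_subset_closure hnot (isCircuit_triple_reverse (h.triangle i))
      (hspoke fun hi ↦ h.one_ne_zero (by simpa using hi)) hC hin fun c hc ↦ ?_
    exact h.mem_closure_range_sdiff (hC.subset_ground hc.1) (fun hcs ↦ hc.2 (.inl hcs))
      (fun hcw ↦ hc.2 (.inr hcw)) (fun hcw ↦ hout (hcw ▸ hc.1))

lemma dep_arc (h : IsWheelLabelling M s w) (hij : i ≠ j) :
    M.Dep ({s i, s j} ∪ w '' cycArc k i j) := by
  have := h.neZero
  set X := insert (s i) (w '' cycArc k i j) with hX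
  have hXE : X ⊆ M.E := insert_subset h.spoke_mem_ground
    ((image_subset_range _ _).trans h.range_rim_subset_ground)
  have hcl (l : ℕ) (hl : l ≤ (j - i).val) : s (i + l) ∈ M.closure X := by
    induction l with
    | zero => exact M.mem_closure_of_mem (by simp [hX])
    | succ l ih =>
      have hw : w (i + l) ∈ M.closure X :=
        M.mem_closure_of_mem (.inr ⟨_, ⟨l, by omega, rfl⟩, rfl⟩)
      rw [Nat.cast_succ, ← add_assoc]
      exact mem_closure_of_triangle (isCircuit_triple_swap_right (h.triangle _)) (ih (by omega)) hw
  have hj : s j ∈ M.closure X := by simpa using hcl _ le_rfl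
  have hjX : s j ∉ X := by
    rintro (hji | ⟨x, -, hx⟩)
    exacts [hij (h.spoke_inj.1 hji).symm, h.spoke_ne_rim hx.symm]
  have hunion : {s i, s j} ∪ w '' cycArc k i j = insert (s j) X := by
    rw [hX, insert_union, singleton_union, insert_comm]
  rw [hunion, ← Matroid.not_indep_iff (insert_subset h.spoke_mem_ground hXE)]
  intro hind
  have hnot := hind.notMem_closure_sdiff_of_mem (mem_insert _ _)
  rw [insert_sdiff_self_of_notMem hjX] at hnot
  exact hnot hj

lemma range_rim_subset_or_eq_arc (h : IsWheelLabelling M s w) (hC : M.IsCircuit C) :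
    range w ⊆ C ∨ ∃ i j, i ≠ j ∧ C = {s i, s j} ∪ w '' cycArc k i j := by
  have := h.neZero
  rw [or_iff_not_imp_left, range_subset_iff]
  intro hrim
  have hne : {x | w x ∈ C}.Nonempty := by
    by_contra! hempty
    refine hC.not_indep (h.isBase.indep.subset fun c hc ↦ ?_)
    rcases h.ground_eq ▸ hC.subset_ground hc with hcs | ⟨x, rfl⟩
    · exact hcs
    · exact absurd hc (eq_empty_iff_forall_notMem.1 hempty x)
  obtain ⟨i, j, hij, hsub, hi', hi, hj', hj⟩ := exists_maximal_cycArc hne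
    (fun huniv ↦ hrim (eq_univ_iff_forall.1 huniv))
  refine ⟨i, j, hij, (hC.eq_of_dep_subset (h.dep_arc hij) ?_).symm⟩
  rintro x ((rfl | rfl) | ⟨y, hy, rfl⟩)
  · exact h.spoke_mem_of_xor hC (.inr ⟨hi, hi'⟩)
  · exact h.spoke_mem_of_xor hC (.inl ⟨hj', hj⟩)
  · exact hsub hy

lemma range_rim_subset (h : IsWheelLabelling M s w) (hC : M.IsCircuit C)
    (hs : ∀ i j, s i ∈ C → s j ∈ C → i = j) : range w ⊆ C := by
  rcases h.range_rim_subset_or_eq_arc hC with hw | ⟨i, j, hij, rfl⟩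
  · exact hw
  · exact absurd (hs i j (by simp) (by simp)) hij

lemma isCircuit_arc (h : IsWheelLabelling M s w) (hij : i ≠ j) :
    M.IsCircuit ({s i, s j} ∪ w '' cycArc k i j) := by
  obtain ⟨C, hCsub, hC⟩ := (h.dep_arc hij).exists_isCircuit_subset
  have hrim {x} (hx : w x ∈ C) : x ∈ cycArc k i j := by
    rcases hCsub hx with (hs | hs) | ⟨y, hy, hyx⟩
    exacts [absurd hs.symm h.spoke_ne_rim, absurd hs.symm h.spoke_ne_rim, h.rim_inj.1 hyx ▸ hy]
  have hspoke {x} (hx : s x ∈ C) : x = i ∨ x = j := by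
    rcases hCsub hx with (hs | hs) | ⟨y, -, hy⟩
    exacts [.inl (h.spoke_inj.1 hs), .inr (h.spoke_inj.1 hs), absurd hy.symm h.spoke_ne_rim]
  rcases h.range_rim_subset_or_eq_arc hC with hw | ⟨i', j', hij', rfl⟩
  · exact absurd (hrim (hw (mem_range_self j))) right_notMem_cycArc
  -- The arc starts at `i'`, so `i' = j` would put `j` in `cycArc k i j`.
  have hi' : i' ≠ j := fun hi ↦ right_notMem_cycArc
    (hi ▸ hrim (.inr (mem_image_of_mem w (left_mem_cycArc hij'))))
  obtain rfl := (hspoke (x := i') (by simp)).resolve_right hi'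
  obtain rfl := (hspoke (x := j') (by simp)).resolve_left hij'.symm
  exact hC

lemma isCircuit_insert_range_rim (h : IsWheelLabelling M s w) (hw : M.Indep (range w))
    (i : ZMod k) : M.IsCircuit (insert (s i) (range w)) := by
  have := h.neZero
  have hdep : M.Dep (insert (s i) (range w)) := by
    rw [← Matroid.not_indep_iff (insert_subset h.spoke_mem_ground h.range_rim_subset_ground)]
    intro hind
    have hle := hind.encard_le_eRank
    rw [encard_insert_of_notMem (by rintro ⟨j, hj⟩; exact h.spoke_ne_rim hj.symm),
      ← h.isBase.encard_eq_eRank, ← image_univ, ← image_univ,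
      Function.Injective.encard_image fun _ _ ↦ h.spoke_inj.1,
      Function.Injective.encard_image fun _ _ ↦ h.rim_inj.1] at hle
    exact ((ENat.add_one_le_iff (encard_ne_top_iff.2 finite_univ)).1 hle).false
  obtain ⟨C, hCsub, hC⟩ := hdep.exists_isCircuit_subset
  have hspoke {x} (hx : s x ∈ C) : x = i := by
    rcases hCsub hx with hs | ⟨y, hy⟩
    exacts [h.spoke_inj.1 hs, absurd hy.symm h.spoke_ne_rim]
  have hwC := h.range_rim_subset hC fun x y hx hy ↦ (hspoke hx).trans (hspoke hy).symm
  have hsC : s i ∈ C := by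
    by_contra hsC
    exact hC.not_indep (hw.subset ((subset_insert_iff_of_notMem hsC).1 hCsub))
  rwa [← hCsub.antisymm (insert_subset hsC hwC)]

lemma isWhirl (h : IsWheelLabelling M s w) (hw : M.Indep (range w)) : IsWhirl M := by
  refine ⟨k, h.two_le, s, w, h.injective, h.ground_eq, fun C ↦ ?_⟩
  rw [isCircuit_iff]
  constructor
  · intro hC
    refine (h.range_rim_subset_or_eq_arc hC).imp_left fun hwC ↦ ?_
    obtain ⟨c, hcC, hcw⟩ := not_subset.1 fun hCw ↦ hC.not_indep (hw.subset hCw)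
    obtain ⟨i, rfl⟩ := (h.ground_eq ▸ hC.subset_ground hcC).resolve_right hcw
    exact ⟨i, ((h.isCircuit_insert_range_rim hw i).eq_of_subset_isCircuit hC
      (insert_subset hcC hwC)).symm⟩
  · rintro (⟨i, rfl⟩ | ⟨i, j, hij, rfl⟩)
    exacts [h.isCircuit_insert_range_rim hw i, h.isCircuit_arc hij]

lemma isWheel (h : IsWheelLabelling M s w) (hw : M.Dep (range w)) : IsWheel M := by
  refine ⟨k, h.two_le, s, w, h.injective, h.ground_eq, fun C ↦ ?_⟩
  rw [isCircuit_iff]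
  constructor
  · intro hC
    exact (h.range_rim_subset_or_eq_arc hC).imp_left fun hwC ↦ (hC.eq_of_dep_subset hw hwC).symm
  · rintro (rfl | ⟨i, j, hij, rfl⟩)
    · obtain ⟨C, hCsub, hC⟩ := hw.exists_isCircuit_subset
      have hspoke (i) : s i ∉ C := fun hi ↦ by
        obtain ⟨x, hx⟩ := hCsub hi
        exact h.spoke_ne_rim hx.symm
      rwa [(h.range_rim_subset hC fun i _ hi ↦ absurd hi (hspoke i)).antisymm hCsub]
    · exact h.isCircuit_arc hij

lemma isWheel_or_isWhirl (h : IsWheelLabelling M s w) : IsWheel M ∨ IsWhirl M :=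
  (M.indep_or_dep h.range_rim_subset_ground).symm.imp h.isWheel h.isWhirl

end IsWheelLabelling

lemma isBase_of_encard_le_eRank {S : Set α} (hS : S.Finite) (hE : M.E ⊆ M.closure S)
    (hr : S.encard ≤ M.eRank) (hSE : S ⊆ M.E) : M.IsBase S := by
  have hspan := (Matroid.spanning_iff_ground_subset_closure hSE).2 hE
  refine Matroid.Indep.isBase_of_spanning ?_ hspan
  exact (M.isRkFinite_of_finite hS).indep_of_encard_le_eRk (hr.trans hspan.eRk_eq.ge)

section CyclicSequence

variable {k : ℕ} {g : ℕ → α}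

lemma image_Iio_two_mul [NeZero k] (g : ℕ → α) : g '' Iio (2 * k) =
    (range fun i : ZMod k ↦ g (2 * i.val)) ∪ range fun i : ZMod k ↦ g (2 * i.val + 1) := by
  refine Subset.antisymm ?_ (union_subset ?_ ?_)
  · rintro _ ⟨t, ht, rfl⟩
    have hval : ((t / 2 : ℕ) : ZMod k).val = t / 2 :=
      ZMod.val_natCast_of_lt (by rw [mem_Iio] at ht; omega)
    rcases Nat.mod_two_eq_zero_or_one t with h | h
    · exact .inl ⟨(t / 2 : ℕ), congrArg g (by omega)⟩
    · exact .inr ⟨(t / 2 : ℕ), congrArg g (by omega)⟩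
  all_goals
    rintro _ ⟨i, rfl⟩
    have := ZMod.val_lt i
    exact mem_image_of_mem g (by rw [mem_Iio]; omega)

lemma injective_sumElim_of_injOn [NeZero k] (hg : InjOn g (Iio (2 * k))) :
    Function.Injective
      (Sum.elim (fun i : ZMod k ↦ g (2 * i.val)) fun i : ZMod k ↦ g (2 * i.val + 1)) := by
  rintro (i | i) (j | j) h <;> have hi := ZMod.val_lt i <;> have hj := ZMod.val_lt j <;>
    have hij := hg (by rw [mem_Iio]; omega) (by rw [mem_Iio]; omega) h
  · exact congrArg _ (ZMod.val_injective k (by omega))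
  · omega
  · omega
  · exact congrArg _ (ZMod.val_injective k (by omega))

lemma isWheelLabelling_of_seq (hk : 2 ≤ k) (hg : InjOn g (Iio (2 * k)))
    (hE : M.E = g '' Iio (2 * k)) (hr : k ≤ M.eRank)
    (htri : ∀ i < k, M.IsCircuit {g (2 * i), g (2 * i + 1), g ((2 * i + 2) % (2 * k))}) :
    IsWheelLabelling M (fun i : ZMod k ↦ g (2 * i.val)) (fun i ↦ g (2 * i.val + 1)) := by
  have : NeZero k := ⟨by omega⟩
  have : Fact (1 < k) := ⟨hk⟩
  set s : ZMod k → α := fun i ↦ g (2 * i.val)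
  have hground := hE.trans (image_Iio_two_mul g)
  have hsE : range s ⊆ M.E := hground ▸ subset_union_left
  have htriangle (i : ZMod k) : M.IsCircuit {s i, g (2 * i.val + 1), s (i + 1)} := by
    simp only [s, ZMod.val_add, ZMod.val_one, ← Nat.mul_mod_mul_left]
    exact htri i.val (ZMod.val_lt i)
  have hs (i : ZMod k) : s i ∈ M.closure (range s) := M.mem_closure_of_mem (mem_range_self i)
  refine ⟨hk, injective_sumElim_of_injOn hg, hground,
    isBase_of_encard_le_eRank (finite_range s) ?_ ?_ hsE, htriangle⟩
  · refine hground.trans_subset (union_subset (M.subset_closure _) ?_)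
    rintro _ ⟨i, rfl⟩
    exact mem_closure_of_triangle (htriangle i) (hs i) (hs (i + 1))
  · calc (range s).encard ≤ (univ : Set (ZMod k)).encard := by
          rw [← image_univ]; exact encard_image_le s univ
      _ = k := by simp
      _ ≤ M.eRank := hr

end CyclicSequence

/-! ### Fans beginning and ending with a rim element -/

/-- `e 0, ..., e (2 * m)` is a fan of `M` with `m` triads that begins and ends with a rim element:
here the rim elements are those of even index. Neither `m = 0` nor `m = 1` asks for a triangle. -/
structure IsRimFan (M : Matroid α) (m : ℕ) (e : ℕ → α) : Prop where
  injOn : InjOn e (Iic (2 * m))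
  triad : ∀ i < m, M.IsCocircuit {e (2 * i), e (2 * i + 1), e (2 * i + 2)}
  triangle : ∀ i, i + 1 < m → M.IsCircuit {e (2 * i + 1), e (2 * i + 2), e (2 * i + 3)}

namespace IsRimFan

variable {m : ℕ} {e : ℕ → α}

lemma dropLast (h : IsRimFan M (m + 1) e) : IsRimFan M m e where
  injOn := h.injOn.mono (Iic_subset_Iic.2 (by omega))
  triad i hi := h.triad i (by omega)
  triangle i hi := h.triangle i (by omega)

lemma dropFirst (h : IsRimFan M (m + 1) e) : IsRimFan M m (fun i ↦ e (i + 2)) where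
  injOn i hi j hj hij := by
    rw [mem_Iic] at hi hj
    have := h.injOn (mem_Iic.2 (by omega)) (mem_Iic.2 (by omega)) hij
    omega
  triad i hi := h.triad (i + 1) (by omega)
  triangle i hi := h.triangle (i + 1) (by omega)

lemma mem_ground (h : IsRimFan M (m + 1) e) {i : ℕ} (hi : i ≤ 2 * m + 2) : e i ∈ M.E := by
  rcases Nat.mod_two_eq_zero_or_one i with hi2 | hi2
  · rcases eq_or_ne i 0 with rfl | hi0
    · exact (h.triad 0 (by omega)).subset_ground (by simp)
    · obtain ⟨j, rfl⟩ : ∃ j, i = 2 * j + 2 := ⟨(i - 2) / 2, by omega⟩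
      exact (h.triad j (by omega)).subset_ground (by simp)
  · obtain ⟨j, rfl⟩ : ∃ j, i = 2 * j + 1 := ⟨i / 2, by omega⟩
    exact (h.triad j (by omega)).subset_ground (by simp)

lemma injOn_iff (h : IsRimFan M m e) {i j : ℕ} (hi : i ≤ 2 * m) (hj : j ≤ 2 * m) :
    e i = e j ↔ i = j := h.injOn.eq_iff hi hj

lemma ne (h : IsRimFan M m e) {i j : ℕ} (hi : i ≤ 2 * m) (hj : j ≤ 2 * m) (hij : i ≠ j) :
    e i ≠ e j := (h.injOn_iff hi hj).not.2 hij

lemma image_Iic_subset_ground (h : IsRimFan M (m + 1) e) : e '' Iic (2 * (m + 1)) ⊆ M.E := by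
  rintro _ ⟨i, hi, rfl⟩
  exact h.mem_ground hi

/-- Consecutive triads share only a rim element, which is not a coloop; so by submodularity each
triad lowers the rank of the complement by one. -/
lemma eRk_compl_add_le [M.RankFinite] [M✶.Loopless] (h : IsRimFan M m e) :
    M.eRk (M.E \ e '' Iic (2 * m)) + m ≤ M.eRank := by
  induction m with
  | zero => simpa using M.eRk_le_eRank _
  | succ m ih =>
    set K : Set α := {e (2 * m), e (2 * m + 1), e (2 * m + 2)}
    have hunion : e '' Iic (2 * (m + 1)) = e '' Iic (2 * m) ∪ K := by
      have hIic : Iic (2 * (m + 1)) = Iic (2 * m) ∪ {2 * m, 2 * m + 1, 2 * m + 2} := by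
        ext i
        simp only [mem_union, mem_Iic, mem_insert_iff, mem_singleton_iff]
        omega
      rw [hIic, image_union, image_insert_eq, image_pair]
    have hinter : e '' Iic (2 * m) ∩ K ⊆ {e (2 * m)} := by
      rintro _ ⟨⟨i, hi, rfl⟩, hK⟩
      rw [mem_Iic] at hi
      simp only [K, mem_insert_iff, mem_singleton_iff] at hK
      rw [h.injOn_iff (by omega) (by omega), h.injOn_iff (by omega) (by omega),
        h.injOn_iff (by omega) (by omega)] at hK
      exact congrArg e (by omega)
    have hco : M.Coindep (e '' Iic (2 * m) ∩ K) :=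
      (Matroid.indep_singleton.2 (M✶.isNonloop_of_loopless (h.mem_ground (by omega)))).subset hinter
    calc M.eRk (M.E \ e '' Iic (2 * (m + 1))) + (m + 1 : ℕ)
        = M.eRk (M.E \ (e '' Iic (2 * m) ∪ K)) + 1 + m := by rw [hunion]; push_cast; ring
      _ ≤ M.eRk (M.E \ e '' Iic (2 * m)) + m := by
        gcongr
        exact eRk_compl_union_cocircuit_add_one_le (h.triad m (by omega)) hco
      _ ≤ M.eRank := ih h.dropLast

lemma encard_compl_le_one (hM : ThreeConn M) (hcard : 4 ≤ M.E.encard) (h : IsRimFan M (m + 1) e)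
    (hr : M.eRk (e '' Iic (2 * (m + 1))) ≤ m + 2) :
    (M.E \ e '' Iic (2 * (m + 1))).encard ≤ 1 := by
  have := hM.rankFinite hcard
  have := hM.dual_loopless hcard
  set Y := e '' Iic (2 * (m + 1))
  have h2 : 2 ≤ Y.encard := by
    rw [h.injOn.encard_image, ← one_add_one_eq_two]
    refine Order.add_one_le_of_lt (one_lt_encard_iff_nontrivial.2 ?_)
    exact ⟨0, by simp, 1, by rw [mem_Iic]; omega, by simp⟩
  by_contra! hlt
  refine (hM.eRank_add_one_lt h.image_Iic_subset_ground h2 ?_).not_ge ?_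
  · rw [← one_add_one_eq_two]
    exact Order.add_one_le_of_lt hlt
  calc M.eRk Y + M.eRk (M.E \ Y) ≤ (m + 2) + M.eRk (M.E \ Y) := by gcongr
    _ = M.eRk (M.E \ Y) + (m + 1 : ℕ) + 1 := by push_cast; ring
    _ ≤ M.eRank + 1 := by gcongr; exact h.eRk_compl_add_le

lemma add_two_le_eRank (hM : ThreeConn M) (hcard : 4 ≤ M.E.encard) (h : IsRimFan M (m + 1) e) :
    m + 2 ≤ M.eRank := by
  have := hM.rankFinite hcard
  have := hM.dual_loopless hcard
  have hne : e (2 * m + 1) ≠ e (2 * m + 2) := h.ne (by omega) (by omega) (by omega)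
  have hpair : M.Indep {e (2 * m + 1), e (2 * m + 2)} :=
    hM.indep_pair hcard (h.mem_ground (by omega)) (h.mem_ground (by omega)) hne
  have hsub : {e (2 * m + 1), e (2 * m + 2)} ⊆ M.E \ e '' Iic (2 * m) := by
    refine subset_sdiff.2 ⟨hpair.subset_ground, disjoint_left.2 ?_⟩
    rintro _ (rfl | rfl) ⟨i, hi, hie⟩ <;> rw [mem_Iic] at hi
    all_goals exact h.ne (by omega) (by omega) (by omega) hie
  calc (m + 2 : ℕ∞) = M.eRk {e (2 * m + 1), e (2 * m + 2)} + m := by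
        rw [hpair.eRk_eq_encard, encard_pair hne, add_comm]
    _ ≤ M.eRk (M.E \ e '' Iic (2 * m)) + m := by gcongr; exact M.eRk_mono hsub
    _ ≤ M.eRank := h.dropLast.eRk_compl_add_le

lemma image_Ioo_subset_closure_spokes (h : IsRimFan M (m + 1) e) :
    e '' Ioo 0 (2 * (m + 1)) ⊆ M.closure ((fun i ↦ e (2 * i + 1)) '' Iio (m + 1)) := by
  have hspoke {i : ℕ} (hi : i < m + 1) :
      e (2 * i + 1) ∈ M.closure ((fun i ↦ e (2 * i + 1)) '' Iio (m + 1)) :=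
    M.mem_closure_of_mem' ⟨i, hi, rfl⟩ (h.mem_ground (by omega))
  rintro _ ⟨t, ⟨ht0, htm⟩, rfl⟩
  rcases Nat.mod_two_eq_zero_or_one t with h2 | h2
  · obtain ⟨i, rfl⟩ : ∃ i, t = 2 * i + 2 := ⟨(t - 2) / 2, by omega⟩
    exact mem_closure_of_triangle (h.triangle i (by omega)) (hspoke (by omega))
      (hspoke (i := i + 1) (by omega))
  · obtain ⟨i, rfl⟩ : ∃ i, t = 2 * i + 1 := ⟨t / 2, by omega⟩
    exact hspoke (by omega)

/-- Otherwise deleting the first and the last element would not lower the rank, although the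
remaining elements are spanned by the `m + 1` spokes. -/
lemma compl_nonempty (hM : ThreeConn M) (hcard : 4 ≤ M.E.encard) (h : IsRimFan M (m + 1) e) :
    (M.E \ e '' Iic (2 * (m + 1))).Nonempty := by
  by_contra! hempty
  have hsub : M.E \ {e 0, e (2 * m + 2)} ⊆ e '' Ioo 0 (2 * (m + 1)) := by
    rintro _ ⟨hx, hx'⟩
    obtain ⟨t, ht, rfl⟩ := sdiff_eq_empty.1 hempty hx
    have ht0 : t ≠ 0 := fun ht0 ↦ hx' (by simp [ht0])
    have htm : t ≠ 2 * m + 2 := fun htm ↦ hx' (by simp [htm])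
    rw [mem_Iic] at ht
    exact ⟨t, ⟨by omega, by omega⟩, rfl⟩
  have hco := hM.coindep_pair hcard (h.mem_ground (i := 0) (by omega))
    (h.mem_ground (i := 2 * m + 2) (by omega)) (h.ne (by omega) (by omega) (by omega))
  have hupper : M.eRank ≤ m + 1 :=
    calc M.eRank = M.eRk (M.E \ {e 0, e (2 * m + 2)}) := hco.compl_spanning.eRk_eq.symm
      _ ≤ M.eRk (M.closure ((fun i ↦ e (2 * i + 1)) '' Iio (m + 1))) :=
        M.eRk_mono (hsub.trans h.image_Ioo_subset_closure_spokes)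
      _ ≤ ((fun i ↦ e (2 * i + 1)) '' Iio (m + 1)).encard := by
        rw [M.eRk_closure_eq]; exact M.eRk_le_encard _
      _ ≤ (Iio (m + 1)).encard := encard_image_le _ _
      _ = m + 1 := by rw [← Finset.coe_Iio, encard_coe_eq_coe_finsetCard, Nat.card_Iio]; rfl
  have hlt := (h.add_two_le_eRank hM hcard).trans hupper
  norm_cast at hlt
  omega

lemma isCircuit_triple_compl (hM : ThreeConn M) (hcard : 4 ≤ M.E.encard) (h : IsRimFan M m e)
    (hr : M.eRank ≤ m + 2) {a b c : α} (hsub : {a, b, c} ⊆ M.E \ e '' Iic (2 * m)) (hab : a ≠ b)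
    (hac : a ≠ c) (hbc : b ≠ c) : M.IsCircuit {a, b, c} := by
  have := hM.rankFinite hcard
  have := hM.dual_loopless hcard
  have ha : a ∈ M.E := (hsub (by simp)).1
  have hb : b ∈ M.E := (hsub (by simp)).1
  have hc : c ∈ M.E := (hsub (by simp)).1
  refine isCircuit_triple_of_eRk_le_two (hM.indep_pair hcard ha hb hab)
    (hM.indep_pair hcard ha hc hac) (hM.indep_pair hcard hb hc hbc) hab hac hbc ?_
  rw [← ENat.add_le_add_iff_right (ENat.natCast_ne_top m)]
  calc M.eRk {a, b, c} + m ≤ M.eRk (M.E \ e '' Iic (2 * m)) + m := by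
        gcongr; exact M.eRk_mono hsub
    _ ≤ M.eRank := h.eRk_compl_add_le
    _ ≤ 2 + m := by rwa [add_comm]

lemma eRank_eq (hM : ThreeConn M) (hcard : 4 ≤ M.E.encard) (h : IsRimFan M (m + 1) e)
    (hr : M.eRk (e '' Iic (2 * (m + 1))) ≤ m + 2) {f : α}
    (hf : M.E \ e '' Iic (2 * (m + 1)) = {f}) : M.eRank = m + 2 := by
  have := hM.rankFinite hcard
  have := hM.loopless hcard
  have := hM.dual_loopless hcard
  have hfE : f ∈ M.E := (hf.ge rfl).1
  apply le_antisymm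
  · have hco : M.Coindep {f} := Matroid.indep_singleton.2 (M✶.isNonloop_of_loopless hfE)
    rw [← hco.compl_spanning.eRk_eq, ← hf, sdiff_sdiff_cancel_left h.image_Iic_subset_ground]
    exact hr
  · calc (m + 2 : ℕ∞) = M.eRk (M.E \ e '' Iic (2 * (m + 1))) + (m + 1 : ℕ) := by
          rw [hf, M.eRk_singleton_eq]; push_cast; ring
      _ ≤ M.eRank := h.eRk_compl_add_le

lemma isCircuit_first (hM : ThreeConn M) (hcard : 4 ≤ M.E.encard) (h : IsRimFan M (m + 1) e)
    (hr : M.eRank ≤ m + 2) {f : α} (hf : f ∈ M.E \ e '' Iic (2 * (m + 1))) :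
    M.IsCircuit {f, e 0, e 1} := by
  have hfe {i : ℕ} (hi : i ≤ 2 * (m + 1)) : f ≠ e i := fun hfi ↦ hf.2 ⟨i, hi, hfi.symm⟩
  refine h.dropFirst.isCircuit_triple_compl hM hcard hr (subset_sdiff.2 ⟨?_, ?_⟩)
    (hfe (by omega)) (hfe (by omega)) (h.ne (by omega) (by omega) (by omega))
  · rintro _ (rfl | rfl | rfl)
    exacts [hf.1, h.mem_ground (by omega), h.mem_ground (by omega)]
  · rw [disjoint_left]
    rintro _ (rfl | rfl | rfl) ⟨i, hi, hie⟩ <;> rw [mem_Iic] at hi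
    · exact hfe (by omega) hie.symm
    all_goals exact h.ne (by omega) (by omega) (by omega) hie

lemma isCircuit_last (hM : ThreeConn M) (hcard : 4 ≤ M.E.encard) (h : IsRimFan M (m + 1) e)
    (hr : M.eRank ≤ m + 2) {f : α} (hf : f ∈ M.E \ e '' Iic (2 * (m + 1))) :
    M.IsCircuit {e (2 * m + 1), e (2 * m + 2), f} := by
  have hfe {i : ℕ} (hi : i ≤ 2 * (m + 1)) : e i ≠ f := fun hfi ↦ hf.2 ⟨i, hi, hfi⟩
  refine h.dropLast.isCircuit_triple_compl hM hcard hr (subset_sdiff.2 ⟨?_, ?_⟩)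
    (h.ne (by omega) (by omega) (by omega)) (hfe (by omega)) (hfe (by omega))
  · rintro _ (rfl | rfl | rfl)
    exacts [h.mem_ground (by omega), h.mem_ground (by omega), hf.1]
  · rw [disjoint_left]
    rintro _ (rfl | rfl | rfl) ⟨i, hi, hie⟩ <;> rw [mem_Iic] at hi
    · exact h.ne (by omega) (by omega) (by omega) hie
    · exact h.ne (by omega) (by omega) (by omega) hie
    · exact hfe (by omega) hie

/-- Under the rank bound exactly one element `f` lies outside the fan, and `f, e 0, e 1, ...` is
the cyclic sequence of alternating spokes and rim elements. -/
lemma isWheel_or_isWhirl (hM : ThreeConn M) (hcard : 4 ≤ M.E.encard) (h : IsRimFan M (m + 1) e)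
    (hr : M.eRk (e '' Iic (2 * (m + 1))) ≤ m + 2) : IsWheel M ∨ IsWhirl M := by
  obtain ⟨f, hf⟩ := encard_eq_one.1 ((h.encard_compl_le_one hM hcard hr).antisymm
    (one_le_encard_iff_nonempty.2 (h.compl_nonempty hM hcard)))
  have hrank := h.eRank_eq hM hcard hr hf
  have hfY : f ∈ M.E \ e '' Iic (2 * (m + 1)) := hf.ge rfl
  let g : ℕ → α := fun i ↦ i.casesOn f e
  have hg : g '' Iio (2 * (m + 2)) = insert f (e '' Iic (2 * (m + 1))) := by
    ext x
    constructor
    · rintro ⟨_ | t, ht, rfl⟩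
      exacts [.inl rfl, .inr ⟨t, by rw [mem_Iio] at ht; rw [mem_Iic]; omega, rfl⟩]
    · rintro (rfl | ⟨t, ht, rfl⟩)
      exacts [⟨0, by simp, rfl⟩, ⟨t + 1, by rw [mem_Iic] at ht; rw [mem_Iio]; omega, rfl⟩]
  refine (isWheelLabelling_of_seq (M := M) (g := g) (k := m + 2) (by omega) ?_ ?_ hrank.ge
    ?_).isWheel_or_isWhirl
  · rintro (_ | i) hi (_ | j) hj hij <;> rw [mem_Iio] at hi hj
    · exact absurd ⟨j, mem_Iic.2 (by omega), hij.symm⟩ hfY.2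
    · exact absurd ⟨i, mem_Iic.2 (by omega), hij⟩ hfY.2
    · exact congrArg _ ((h.injOn_iff (by omega) (by omega)).1 hij)
  · rw [hg, ← singleton_union, ← hf, sdiff_union_of_subset h.image_Iic_subset_ground]
  · rintro (_ | i) hi
    · exact h.isCircuit_first hM hcard hrank.le hfY
    · rcases eq_or_ne i m with rfl | him
      · rw [show (2 * (i + 1) + 2) % (2 * (i + 2)) = 0 from Nat.mod_self _]
        exact h.isCircuit_last hM hcard hrank.le hfY
      · rw [Nat.mod_eq_of_lt (by omega)]
        exact h.triangle i (by omega)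

end IsRimFan

/-! ### The basis of a fan -/

section Parity

variable {b : Bool} {i : ℕ}

lemma posBool_eq_true_iff : posBool b i = true ↔ (i + b.toNat) % 2 = 0 := by
  cases b <;> simp [posBool]; omega

lemma posBool_eq_false_iff : posBool b i = false ↔ (i + b.toNat) % 2 = 1 := by
  cases b <;> simp [posBool]; omega

end Parity

/-- The set of indices of the spoke elements and of the two ends of the fan `(e 1, ..., e n)`. Its
image is a basis of the set of elements of the fan, unless the matroid is a wheel or a whirl. -/
def fanBasis (b : Bool) (n : ℕ) : Set ℕ :=
  {i ∈ Icc 1 n | i = 1 ∨ i = n ∨ posBool b i = true}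

lemma fanBasis_subset_Icc (b : Bool) (n : ℕ) : fanBasis b n ⊆ Icc 1 n := sep_subset _ _

lemma exists_neighbours_of_notMem_fanBasis {b : Bool} {n t : ℕ} (ht1 : 1 ≤ t) (htn : t ≤ n)
    (ht : t ∉ fanBasis b n) :
    ∃ i, t = i + 1 ∧ i ∈ fanBasis b n ∧ i + 2 ∈ fanBasis b n ∧ posBool b i = true := by
  have hrim : ¬(t = 1 ∨ t = n ∨ posBool b t = true) := fun h ↦ ht ⟨⟨ht1, htn⟩, h⟩
  rw [posBool_eq_true_iff, not_or, not_or] at hrim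
  have hi : posBool b (t - 1) = true := posBool_eq_true_iff.2 (by omega)
  have hi' : posBool b (t - 1 + 2) = true := posBool_eq_true_iff.2 (by omega)
  exact ⟨t - 1, by omega, ⟨⟨by omega, by omega⟩, .inr (.inr hi)⟩,
    ⟨⟨by omega, by omega⟩, .inr (.inr hi')⟩, hi⟩

lemma encard_fanBasis_le (b : Bool) (n : ℕ) :
    (fanBasis b n).encard ≤ ((n - (1 + b.toNat)) / 2 : ℕ) + 2 := by
  set m := (n - (1 + b.toNat)) / 2
  have hsub : fanBasis b n ⊆ (fun j ↦ 2 + b.toNat + 2 * j) '' Iio m ∪ {1, n} := by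
    rintro i ⟨⟨hi1, hin⟩, hi⟩
    rw [posBool_eq_true_iff] at hi
    rw [mem_union, mem_insert_iff, mem_singleton_iff, or_iff_not_imp_right]
    have hb := b.toNat_le
    exact fun hne ↦ ⟨(i - (2 + b.toNat)) / 2, mem_Iio.2 (by omega), by grind⟩
  calc (fanBasis b n).encard
      ≤ ((fun j ↦ 2 + b.toNat + 2 * j) '' Iio m).encard + ({1, n} : Set ℕ).encard :=
        (encard_le_encard hsub).trans (encard_union_le _ _)
    _ ≤ (Iio m).encard + 2 := by exact add_le_add (encard_image_le _ _) (encard_pair_le_two 1 n)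
    _ = m + 2 := by rw [← Finset.coe_Iio, encard_coe_eq_coe_finsetCard, Nat.card_Iio]

namespace IsFanFun

variable {b : Bool} {n : ℕ} {e : ℕ → α} {C : Set α}

lemma injOn (h : IsFanFun M b n e) : InjOn e (Icc 1 n) :=
  fun i hi j hj hij ↦ h.2.1 i j hi.1 hi.2 hj.1 hj.2 hij

lemma mem_ground (h : IsFanFun M b n e) {i : ℕ} (h1 : 1 ≤ i) (hn : i ≤ n) : e i ∈ M.E :=
  h.2.2.1 i h1 hn

lemma triangle (h : IsFanFun M b n e) {i : ℕ} (h1 : 1 ≤ i) (hn : i + 2 ≤ n)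
    (hi : posBool b i = true) : M.IsCircuit {e i, e (i + 1), e (i + 2)} := by
  have htri := h.2.2.2 i h1 hn
  rw [TriOrTriad, hi] at htri
  exact isCircuit_iff.1 htri.1

lemma triad (h : IsFanFun M b n e) {i : ℕ} (h1 : 1 ≤ i) (hn : i + 2 ≤ n)
    (hi : posBool b i = false) : M.IsCocircuit {e i, e (i + 1), e (i + 2)} := by
  have htri := h.2.2.2 i h1 hn
  rw [TriOrTriad, hi] at htri
  exact isCircuit_iff.1 htri.1

lemma isRimFan (h : IsFanFun M b n e) {m : ℕ} (hm : 1 + b.toNat + 2 * m ≤ n) :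
    IsRimFan M m (fun j ↦ e (1 + b.toNat + j)) where
  injOn i hi j hj hij := by
    rw [mem_Iic] at hi hj
    exact add_left_cancel (h.injOn ⟨by omega, by omega⟩ ⟨by omega, by omega⟩ hij)
  triad i hi := h.triad (by omega) (by omega) (posBool_eq_false_iff.2 (by omega))
  triangle i hi := h.triangle (by omega) (by omega) (posBool_eq_true_iff.2 (by omega))

lemma mem_closure_image (h : IsFanFun M b n e) {Q : Set ℕ} (hQ : Q ⊆ fanBasis b n) {t : ℕ}
    (h1 : 1 ≤ t) (hn : t ≤ n)
    (ht : t ∈ Q ∨ t ∉ fanBasis b n ∧ ∀ p ∈ fanBasis b n, p + 1 = t ∨ t + 1 = p → p ∈ Q) :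
    e t ∈ M.closure (e '' Q) := by
  have hmem {q : ℕ} (hq : q ∈ Q) : e q ∈ M.closure (e '' Q) :=
    M.mem_closure_of_mem' (mem_image_of_mem e hq) (h.mem_ground (hQ hq).1.1 (hQ hq).1.2)
  rcases ht with ht | ⟨ht, hadj⟩
  · exact hmem ht
  obtain ⟨i, rfl, hi, hi', hpos⟩ := exists_neighbours_of_notMem_fanBasis h1 hn ht
  exact mem_closure_of_triangle (h.triangle hi.1.1 hi'.1.2 hpos) (hmem (hadj i hi (.inl rfl)))
    (hmem (hadj (i + 2) hi' (.inr rfl)))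

lemma image_Icc_subset_closure (h : IsFanFun M b n e) :
    e '' Icc 1 n ⊆ M.closure (e '' fanBasis b n) := by
  rintro _ ⟨t, ht, rfl⟩
  exact h.mem_closure_image subset_rfl ht.1 ht.2 ((em _).imp_right fun ht ↦ ⟨ht, fun _ hp _ ↦ hp⟩)

lemma indep_image_fanBasis (hM : ThreeConn M) (hcard : 4 ≤ M.E.encard) (hW : ¬ IsWheel M)
    (hWh : ¬ IsWhirl M) (h : IsFanFun M b n e) : M.Indep (e '' fanBasis b n) := by
  have hn := h.1
  have hb := b.toNat_le
  set k := (n - (1 + b.toNat)) / 2 with hk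
  have hle := encard_fanBasis_le b n
  rw [← hk] at hle
  obtain h0 | ⟨m, hm⟩ : k = 0 ∨ ∃ m, k = m + 1 := by cases k <;> simp
  · have hpair : fanBasis b n ⊆ {1, 3} := by
      rintro i ⟨⟨hi1, hin⟩, hi⟩
      rw [posBool_eq_true_iff] at hi
      rw [mem_insert_iff, mem_singleton_iff]
      omega
    refine (hM.indep_pair hcard (h.mem_ground le_rfl (by omega)) (h.mem_ground (by omega) hn)
      (h.injOn.ne ⟨le_rfl, by omega⟩ ⟨by omega, hn⟩ (by omega : 1 ≠ 3))).subset ?_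
    rw [← image_pair]
    exact image_mono hpair
  · have hfan : IsRimFan M (m + 1) (fun j ↦ e (1 + b.toNat + j)) := h.isRimFan (by omega)
    have hsub : (fun j ↦ e (1 + b.toNat + j)) '' Iic (2 * (m + 1)) ⊆ e '' Icc 1 n := by
      rintro _ ⟨j, hj, rfl⟩
      rw [mem_Iic] at hj
      exact ⟨_, ⟨by omega, by omega⟩, rfl⟩
    have hlt : (m + 2 : ℕ∞) < M.eRk ((fun j ↦ e (1 + b.toNat + j)) '' Iic (2 * (m + 1))) := by
      by_contra! hr
      exact (hfan.isWheel_or_isWhirl hM hcard hr).elim hW hWh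
    have hfin : (fanBasis b n).Finite := (finite_Icc 1 n).subset (sep_subset _ _)
    refine (M.isRkFinite_of_finite (hfin.image e)).indep_of_encard_le_eRk ?_
    calc (e '' fanBasis b n).encard ≤ k + 2 := (encard_image_le _ _).trans hle
      _ = (m + 2) + 1 := by rw [hm]; push_cast; ring
      _ ≤ M.eRk ((fun j ↦ e (1 + b.toNat + j)) '' Iic (2 * (m + 1))) :=
        Order.add_one_le_of_lt hlt
      _ ≤ M.eRk (M.closure (e '' fanBasis b n)) :=
        M.eRk_mono (hsub.trans h.image_Icc_subset_closure)
      _ = M.eRk (e '' fanBasis b n) := M.eRk_closure_eq _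

/-! ### Circuits contained in a fan -/

lemma mem_circuit_of_unique_neighbour (h : IsFanFun M b n e) (hind : M.Indep (e '' fanBasis b n))
    (hC : M.IsCircuit C) (hCfan : C ⊆ fanSet n e) {p q t : ℕ} (hp : p ∈ fanBasis b n)
    (hq : q ∈ fanBasis b n) (hqp : q ≠ p) (htri : M.IsCircuit {e q, e t, e p}) (ht : e t ∈ C)
    (huniq : ∀ s ∈ Icc 1 n \ fanBasis b n, e s ∈ C → p + 1 = s ∨ s + 1 = p → s = t) : e p ∈ C := by
  have hsub : fanBasis b n \ {p} ⊆ fanBasis b n := sdiff_subset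
  have hpcl : e p ∉ M.closure (e '' (fanBasis b n \ {p})) := by
    rw [(h.injOn.mono (fanBasis_subset_Icc b n)).image_sdiff_subset (singleton_subset_iff.2 hp),
      image_singleton]
    exact hind.notMem_closure_sdiff_of_mem (mem_image_of_mem e hp)
  refine mem_of_triangle_of_sdiff_subset_closure hpcl htri
    (h.mem_closure_image hsub hq.1.1 hq.1.2 (.inl ⟨hq, hqp⟩)) hC ht ?_
  rintro c ⟨hc, hcpt⟩
  obtain ⟨s, hs1, hsn, rfl⟩ := hCfan hc
  rw [mem_insert_iff, mem_singleton_iff, not_or] at hcpt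
  refine h.mem_closure_image hsub hs1 hsn ?_
  by_cases hs : s ∈ fanBasis b n
  · exact .inl ⟨hs, fun hsp ↦ hcpt.1 (congrArg e hsp)⟩
  · refine .inr ⟨hs, fun r hr hrs ↦ ⟨hr, ?_⟩⟩
    rintro rfl
    exact hcpt.2 (congrArg e (huniq s ⟨⟨hs1, hsn⟩, hs⟩ hc hrs))

/-- The first and the last interior rim element of `C` are each the only interior rim element of
`C` next to one of their spokes, which must therefore belong to `C`. -/
lemma exists_outer_spokes_mem (h : IsFanFun M b n e) (hind : M.Indep (e '' fanBasis b n))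
    (hC : M.IsCircuit C) (hCfan : C ⊆ fanSet n e) :
    ∃ i j, 1 ≤ i ∧ i ≤ j ∧ j + 2 ≤ n ∧ posBool b i = true ∧
      e '' {i, i + 1, j + 1, j + 2} ⊆ C := by
  set J := {t ∈ Icc 1 n \ fanBasis b n | e t ∈ C}
  have hJ : J.Nonempty := by
    by_contra! hempty
    refine hC.not_indep (hind.subset fun c hc ↦ ?_)
    obtain ⟨t, ht1, htn, rfl⟩ := hCfan hc
    by_contra ht
    exact hempty.subset ⟨⟨⟨ht1, htn⟩, fun ht' ↦ ht (mem_image_of_mem e ht')⟩, hc⟩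
  have hleast : IsLeast J (sInf J) := ⟨Nat.sInf_mem hJ, fun _ ↦ Nat.sInf_le⟩
  have hgreatest : IsGreatest J (sSup J) := by
    have hbdd : BddAbove J := ⟨n, fun t ht ↦ ht.1.1.2⟩
    exact ⟨Nat.sSup_mem hJ hbdd, fun _ ↦ le_csSup hbdd⟩
  obtain ⟨⟨⟨hs1, hsn⟩, hs⟩, hsC⟩ := hleast.1
  obtain ⟨⟨⟨ht1, htn⟩, ht⟩, htC⟩ := hgreatest.1
  obtain ⟨i, hsi, hi, hi', hposi⟩ := exists_neighbours_of_notMem_fanBasis hs1 hsn hs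
  obtain ⟨j, htj, hj, hj', hposj⟩ := exists_neighbours_of_notMem_fanBasis ht1 htn ht
  rw [hsi] at hsC hleast
  rw [htj] at htC hgreatest
  have hiC : e i ∈ C := by
    refine h.mem_circuit_of_unique_neighbour hind hC hCfan hi hi' (by omega)
      (isCircuit_triple_reverse (h.triangle hi.1.1 hi'.1.2 hposi)) hsC fun r hr hrC hadj ↦ ?_
    have := hleast.2 ⟨hr, hrC⟩
    omega
  have hjC : e (j + 2) ∈ C := by
    refine h.mem_circuit_of_unique_neighbour hind hC hCfan hj' hj (by omega)
      (h.triangle hj.1.1 hj'.1.2 hposj) htC fun r hr hrC hadj ↦ ?_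
    have := hgreatest.2 ⟨hr, hrC⟩
    omega
  have hij := hgreatest.2 hleast.1
  refine ⟨i, j, hi.1.1, by omega, hj'.1.2, hposi, ?_⟩
  rintro _ ⟨_, rfl | rfl | rfl | rfl, rfl⟩
  exacts [hiC, hsC, htC, hjC]

lemma encard_image_outer (h : IsFanFun M b n e) {i j : ℕ} (hi : 1 ≤ i) (hij : i < j)
    (hj : j + 2 ≤ n) : (e '' {i, i + 1, j + 1, j + 2}).encard = 4 := by
  have hsub : {i, i + 1, j + 1, j + 2} ⊆ Icc 1 n := by
    rintro t (rfl | rfl | rfl | rfl) <;> exact ⟨by omega, by omega⟩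
  rw [(h.injOn.mono hsub).encard_image, encard_eq_four]
  exact ⟨i, i + 1, j + 1, j + 2, by omega, by omega, by omega, by omega, by omega, by omega, rfl⟩

end IsFanFun

end PaperDefs

/-- Any triangle contained in a fan of a 3-connected matroid (with at least four
elements, and neither a wheel nor a whirl) consists of three consecutive fan elements
starting at a spoke element. -/
theorem statement13 (M : Matroid α) (hM3 : ThreeConn M) (hcard : 4 ≤ M.E.encard)
    (hW : ¬ IsWheel M) (hWh : ¬ IsWhirl M)
    (b : Bool) (n : ℕ) (e : ℕ → α) (hfan : IsFanFun M b n e)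
    (T : Set α) (hT : IsTriangle M T) (hTsub : T ⊆ fanSet n e) :
    ∃ i, 1 ≤ i ∧ i + 2 ≤ n ∧ T = {e i, e (i+1), e (i+2)} ∧ posBool b i = true := by
  have hC := isCircuit_iff.1 hT.1
  obtain ⟨i, j, hi, hij, hj, hpos, hsub⟩ :=
    hfan.exists_outer_spokes_mem (hfan.indep_image_fanBasis hM3 hcard hW hWh) hC hTsub
  obtain rfl : i = j := by
    by_contra hne
    have hle := encard_le_encard hsub
    rw [hfan.encard_image_outer hi (hij.lt_of_ne hne) hj, hT.2] at hle
    exact absurd hle (by norm_num)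
  refine ⟨i, hi, hj, ((hfan.triangle hi hj hpos).eq_of_subset_isCircuit hC ?_).symm, hpos⟩
  rintro x (rfl | rfl | rfl) <;> exact hsub ⟨_, by simp, rfl⟩
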